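/- arXiv:2403.18399 — 4 statements merged into one kernel-verified Lean document; each statement's English description precedes it below -/
import Mathlib

section
/- Let r ≥ 1. There is a Lie algebra isomorphism Φ : ft'(r) → ft(r) determined on generators by Φ(t_{ij}) = t_{ij} for all 1 ≤ i,j ≤ r, Φ(t_{0j}) = Φ(t_{j0}) = −∑_{i=1}^r t_{ij} for all 1 ≤ j ≤ r, and Φ(t_{00}) = ∑_{i,j=1}^r t_{ij}. In particular, the two presentations (the presentation of ft(r) with indices 1,…,r and the manifestly cyclic presentation ft'(r) with indices 0,…,r) define isomorphic Lie algebras. -/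
open FreeLieAlgebra

/-- The defining relations of the framed Drinfeld–Kohno Lie algebra `ft(r)`.  Generators are
indexed by `Fin r × Fin r`, the index `i : Fin r` representing `i+1 ∈ {1,…,r}`. -/
def ftRel (r : ℕ) : Set (FreeLieAlgebra ℚ (Fin r × Fin r)) :=
  { x | (∃ i j : Fin r, x = of ℚ (i, j) - of ℚ (j, i)) ∨
        (∃ i j k l : Fin r, ({i, j} ∩ {k, l} : Set (Fin r)) = ∅ ∧
          x = ⁅of ℚ (i, j), of ℚ (k, l)⁆) ∨
        (∃ i j k : Fin r, x = ⁅of ℚ (i, j), of ℚ (k, i) + of ℚ (k, j)⁆) }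

/-- The framed Drinfeld–Kohno Lie algebra `ft(r)`: the quotient of the free Lie algebra over `ℚ`
on the generators `t_{ij}`, `1 ≤ i,j ≤ r`, by the Lie ideal generated by the relations. -/
abbrev ft (r : ℕ) :=
  FreeLieAlgebra ℚ (Fin r × Fin r) ⧸
    LieSubmodule.lieSpan ℚ (FreeLieAlgebra ℚ (Fin r × Fin r)) (ftRel r)

/-- The image `t_{ij}` in `ft(r)` of the generator indexed by `(i,j)`. -/
noncomputable def tf {r : ℕ} (i j : Fin r) : ft r :=
  LieSubmodule.Quotient.mk
    (N := LieSubmodule.lieSpan ℚ (FreeLieAlgebra ℚ (Fin r × Fin r)) (ftRel r))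
    (of ℚ (i, j))

/-- The defining relations of the cyclically presented framed Drinfeld–Kohno Lie algebra
`ft'(r)`.  Generators are indexed by `Fin (r+1) × Fin (r+1)`, the index `i : Fin (r+1)`
representing `i ∈ {0,…,r}`. -/
def ftcRel (r : ℕ) : Set (FreeLieAlgebra ℚ (Fin (r + 1) × Fin (r + 1))) :=
  { x | (∃ i j : Fin (r + 1), x = of ℚ (i, j) - of ℚ (j, i)) ∨
        (∃ i j k l : Fin (r + 1), ({i, j} ∩ {k, l} : Set (Fin (r + 1))) = ∅ ∧
          x = ⁅of ℚ (i, j), of ℚ (k, l)⁆) ∨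
        (∃ j : Fin (r + 1), x = ∑ i : Fin (r + 1), of ℚ (i, j)) }

/-- The cyclically presented framed Drinfeld–Kohno Lie algebra `ft'(r)`: the quotient of the
free Lie algebra over `ℚ` on the generators `t_{ij}`, `0 ≤ i,j ≤ r`, by the Lie ideal generated
by the relations. -/
abbrev ftc (r : ℕ) :=
  FreeLieAlgebra ℚ (Fin (r + 1) × Fin (r + 1)) ⧸
    LieSubmodule.lieSpan ℚ (FreeLieAlgebra ℚ (Fin (r + 1) × Fin (r + 1))) (ftcRel r)

/-- The image `t_{ij}` in `ft'(r)` of the generator indexed by `(i,j)`. -/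
noncomputable def tc {r : ℕ} (i j : Fin (r + 1)) : ftc r :=
  LieSubmodule.Quotient.mk
    (N := LieSubmodule.lieSpan ℚ (FreeLieAlgebra ℚ (Fin (r + 1) × Fin (r + 1))) (ftcRel r))
    (of ℚ (i, j))

section helpers

variable {X : Type} {L : Type} [LieRing L] [LieAlgebra ℚ L]

/-- The quotient map of a free Lie algebra by the ideal generated by `S`. -/
noncomputable def quoMap (S : Set (FreeLieAlgebra ℚ X)) : FreeLieAlgebra ℚ X →ₗ⁅ℚ⁆
    (FreeLieAlgebra ℚ X ⧸ LieSubmodule.lieSpan ℚ (FreeLieAlgebra ℚ X) S) :=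
  { (LieSubmodule.lieSpan ℚ (FreeLieAlgebra ℚ X) S).toSubmodule.mkQ with
    map_lie' := fun {_ _} => rfl }

theorem quoMap_surj (S : Set (FreeLieAlgebra ℚ X)) : Function.Surjective (quoMap S) :=
  Quot.mk_surjective

theorem quoMap_rel (S : Set (FreeLieAlgebra ℚ X)) {x} (hx : x ∈ S) : quoMap S x = 0 :=
  (Submodule.Quotient.mk_eq_zero _).2 (LieSubmodule.subset_lieSpan hx)

theorem quo_lift (S : Set (FreeLieAlgebra ℚ X)) (f : FreeLieAlgebra ℚ X →ₗ⁅ℚ⁆ L)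
    (h : ∀ x ∈ S, f x = 0) :
    ∃ g : (FreeLieAlgebra ℚ X ⧸ LieSubmodule.lieSpan ℚ (FreeLieAlgebra ℚ X) S) →ₗ⁅ℚ⁆ L,
      ∀ x, g (quoMap S x) = f x := by
  have hle : LieSubmodule.lieSpan ℚ (FreeLieAlgebra ℚ X) S ≤ f.ker :=
    LieSubmodule.lieSpan_le.2 fun x hx => (LieHom.mem_ker).2 (h x hx)
  let g0 : (FreeLieAlgebra ℚ X ⧸ LieSubmodule.lieSpan ℚ (FreeLieAlgebra ℚ X) S) →ₗ[ℚ] L :=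
    Submodule.liftQ _ (f : FreeLieAlgebra ℚ X →ₗ[ℚ] L) (fun x hx => (LieHom.mem_ker).1 (hle hx))
  have hg0 : ∀ x, g0 (quoMap S x) = f x := fun x => rfl
  refine ⟨{ g0 with map_lie' := ?_ }, hg0⟩
  intro a b
  obtain ⟨a, rfl⟩ := quoMap_surj S a
  obtain ⟨b, rfl⟩ := quoMap_surj S b
  change g0 ⁅quoMap S a, quoMap S b⁆ = ⁅g0 (quoMap S a), g0 (quoMap S b)⁆
  rw [← LieHom.map_lie, hg0, hg0, hg0, LieHom.map_lie]

variable {r : ℕ}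

/-- Elements satisfying the relations of `ft(r)`. -/
structure IsFt (t : Fin r → Fin r → L) : Prop where
  symm : ∀ i j, t i j = t j i
  disj : ∀ i j k l, k ≠ i → k ≠ j → l ≠ i → l ≠ j → ⁅t i j, t k l⁆ = 0
  tri : ∀ i j k, ⁅t i j, t k i + t k j⁆ = 0

/-- Elements satisfying the relations of `ft'(r)`. -/
structure IsFtc (t : Fin (r + 1) → Fin (r + 1) → L) : Prop where
  symm : ∀ i j, t i j = t j i
  disj : ∀ i j k l, k ≠ i → k ≠ j → l ≠ i → l ≠ j → ⁅t i j, t k l⁆ = 0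
  tot : ∀ j, ∑ i, t i j = 0

theorem half_zero {x : L} (h : x + x = 0) : x = 0 := by
  have h2 : (2 : ℚ) • x = 0 := by rw [two_smul, h]
  exact (smul_eq_zero.1 h2).resolve_left (by norm_num)

theorem ft_diag {t : Fin r → Fin r → L} (h : IsFt t) (i k : Fin r) : ⁅t i i, t k i⁆ = 0 := by
  apply half_zero
  rw [← lie_add]
  exact h.tri i i k

theorem ft_row {t : Fin r → Fin r → L} (h : IsFt t) (k l j : Fin r) (hk : j ≠ k) (hl : j ≠ l) :
    ⁅t k l, ∑ i, t i j⁆ = 0 := by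
  rw [lie_sum]
  by_cases hkl : k = l
  · subst hkl
    apply Finset.sum_eq_zero
    intro i _
    by_cases hi : i = k
    · subst hi
      rw [h.symm i j]
      exact ft_diag h _ _
    · exact h.disj _ _ _ _ hi hi hk hk
  · rw [Fintype.sum_eq_add k l hkl]
    · rw [← lie_add, h.symm k j, h.symm l j]
      exact h.tri _ _ _
    · rintro i ⟨h1, h2⟩
      exact h.disj _ _ _ _ h1 h2 hk hl

theorem ft_row2 {t : Fin r → Fin r → L} (h : IsFt t) (k l : Fin r) :
    ⁅t k l, ∑ i, t i k⁆ + ⁅t k l, ∑ i, t i l⁆ = 0 := by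
  rw [← lie_add, ← Finset.sum_add_distrib, lie_sum]
  exact Finset.sum_eq_zero fun i _ => h.tri k l i

theorem ft_all {t : Fin r → Fin r → L} (h : IsFt t) (k l : Fin r) :
    ⁅t k l, ∑ j, ∑ i, t i j⁆ = 0 := by
  rw [lie_sum]
  by_cases hkl : k = l
  · subst hkl
    apply Finset.sum_eq_zero
    intro j _
    by_cases hj : j = k
    · subst hj
      exact half_zero (ft_row2 h _ _)
    · exact ft_row h _ _ _ hj hj
  · rw [Fintype.sum_eq_add k l hkl]
    · exact ft_row2 h _ _
    · rintro i ⟨h1, h2⟩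
      exact ft_row h _ _ _ h1 h2

/-- The images of the generators of `ft'(r)`. -/
def ext0 (t : Fin r → Fin r → L) : Fin (r + 1) → Fin (r + 1) → L :=
  Fin.cons (Fin.cons (∑ j, ∑ i, t i j) fun j => -∑ i, t i j)
    fun i => Fin.cons (-∑ k, t k i) fun j => t i j

theorem ext0_00 (t : Fin r → Fin r → L) : ext0 t 0 0 = ∑ j, ∑ i, t i j := rfl
theorem ext0_0s (t : Fin r → Fin r → L) (j) : ext0 t 0 (Fin.succ j) = -∑ i, t i j := rfl
theorem ext0_s0 (t : Fin r → Fin r → L) (j) : ext0 t (Fin.succ j) 0 = -∑ i, t i j := rfl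
theorem ext0_ss (t : Fin r → Fin r → L) (i j) : ext0 t (Fin.succ i) (Fin.succ j) = t i j := rfl

theorem ext0_isFtc {t : Fin r → Fin r → L} (h : IsFt t) : IsFtc (ext0 t) := by
  refine ⟨?_, ?_, ?_⟩
  · intro i j
    cases i using Fin.cases <;> cases j using Fin.cases <;>
      simp only [ext0_0s, ext0_s0, ext0_ss]
    exact h.symm _ _
  · intro i j k l h1 h2 h3 h4
    cases i using Fin.cases <;> cases j using Fin.cases <;> cases k using Fin.cases <;>
      cases l using Fin.cases <;>
      simp only [ext0_00, ext0_0s, ext0_s0, ext0_ss, ne_eq, not_true_eq_false, Fin.succ_inj,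
        lie_neg, neg_lie, neg_eq_zero] at * <;> try contradiction
    · rw [← lie_skew, neg_eq_zero]; exact ft_all h _ _
    · rw [← lie_skew, neg_eq_zero]; exact ft_row h _ _ _ (Ne.symm h2) (Ne.symm h4)
    · rw [← lie_skew, neg_eq_zero]; exact ft_row h _ _ _ (Ne.symm h1) (Ne.symm h3)
    · exact ft_all h _ _
    · exact ft_row h _ _ _ h3 h4
    · exact ft_row h _ _ _ h1 h2
    · exact h.disj _ _ _ _ h1 h2 h3 h4
  · intro j
    rw [Fin.sum_univ_succ]
    cases j using Fin.cases <;> simp only [ext0_00, ext0_0s, ext0_s0, ext0_ss]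
    · rw [Finset.sum_neg_distrib, add_neg_cancel]
    · rw [neg_add_cancel]

theorem ftc_diag {t : Fin (r + 1) → Fin (r + 1) → L} (h : IsFtc t) (i j : Fin (r + 1)) :
    ⁅t i i, t i j⁆ = 0 := by
  by_cases hj : j = i
  · subst hj; exact lie_self _
  have e : ⁅t i i, ∑ k, t k j⁆ = 0 := by rw [h.tot, lie_zero]
  rw [lie_sum, Fintype.sum_eq_single i] at e
  · exact e
  · intro k hk
    exact h.disj _ _ _ _ hk hk hj hj

theorem ftc_isFt {t : Fin (r + 1) → Fin (r + 1) → L} (h : IsFtc t) :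
    IsFt fun i j : Fin r => t i.succ j.succ := by
  have tri : ∀ i j k, ⁅t i j, t k i + t k j⁆ = 0 := by
    intro i j k
    by_cases hij : i = j
    · subst hij
      rw [lie_add, h.symm k i, ftc_diag h, add_zero]
    by_cases hki : k = i
    · subst hki
      rw [lie_add, lie_self, add_zero, ← lie_skew, ftc_diag h, neg_zero]
    by_cases hkj : k = j
    · subst hkj
      rw [lie_add, h.symm k i, lie_self, zero_add, ← lie_skew, h.symm i k, ftc_diag h, neg_zero]
    have e : ⁅t i j, ∑ l, t l k⁆ = 0 := by rw [h.tot, lie_zero]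
    rw [lie_sum, Fintype.sum_eq_add i j hij] at e
    · rw [lie_add, h.symm k i, h.symm k j]; exact e
    · rintro l ⟨h1, h2⟩
      exact h.disj _ _ _ _ h1 h2 hki hkj
  refine ⟨fun _ _ => h.symm _ _, fun i j k l h1 h2 h3 h4 => ?_, fun _ _ _ => tri _ _ _⟩
  apply h.disj <;> simpa [Fin.succ_inj]

theorem inter_iff {n : ℕ} (i j k l : Fin n) : ({i, j} ∩ {k, l} : Set (Fin n)) = ∅ ↔
    k ≠ i ∧ k ≠ j ∧ l ≠ i ∧ l ≠ j := by
  rw [← Set.disjoint_iff_inter_eq_empty]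
  simp only [Set.disjoint_insert_left, Set.disjoint_singleton_left, Set.mem_insert_iff,
    Set.mem_singleton_iff]
  grind

end helpers

theorem tf_def {r : ℕ} (i j : Fin r) : tf i j = quoMap (ftRel r) (of ℚ (i, j)) := rfl
theorem tc_def {r : ℕ} (i j : Fin (r + 1)) : tc i j = quoMap (ftcRel r) (of ℚ (i, j)) := rfl

theorem tf_isFt (r : ℕ) : IsFt (tf (r := r)) := by
  refine ⟨?_, ?_, ?_⟩
  · intro i j
    rw [← sub_eq_zero, tf_def, tf_def, ← map_sub]
    exact quoMap_rel _ (Or.inl ⟨i, j, rfl⟩)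
  · intro i j k l h1 h2 h3 h4
    rw [tf_def, tf_def, ← LieHom.map_lie]
    exact quoMap_rel _ (Or.inr (Or.inl ⟨i, j, k, l, (inter_iff _ _ _ _).2 ⟨h1, h2, h3, h4⟩, rfl⟩))
  · intro i j k
    rw [tf_def, tf_def, tf_def, ← map_add, ← LieHom.map_lie]
    exact quoMap_rel _ (Or.inr (Or.inr ⟨i, j, k, rfl⟩))

theorem tc_isFtc (r : ℕ) : IsFtc (tc (r := r)) := by
  refine ⟨?_, ?_, ?_⟩
  · intro i j
    rw [← sub_eq_zero, tc_def, tc_def, ← map_sub]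
    exact quoMap_rel _ (Or.inl ⟨i, j, rfl⟩)
  · intro i j k l h1 h2 h3 h4
    rw [tc_def, tc_def, ← LieHom.map_lie]
    exact quoMap_rel _ (Or.inr (Or.inl ⟨i, j, k, l, (inter_iff _ _ _ _).2 ⟨h1, h2, h3, h4⟩, rfl⟩))
  · intro j
    simp only [tc_def]
    rw [← map_sum]
    exact quoMap_rel _ (Or.inr (Or.inr ⟨j, rfl⟩))

theorem ft_lift {L : Type} [LieRing L] [LieAlgebra ℚ L] {r : ℕ} {t : Fin r → Fin r → L}
    (h : IsFt t) : ∃ g : ft r →ₗ⁅ℚ⁆ L, ∀ i j, g (tf i j) = t i j := by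
  obtain ⟨g, hg⟩ := quo_lift (ftRel r) (lift ℚ fun p : Fin r × Fin r => t p.1 p.2) (by
    rintro x (⟨i, j, rfl⟩ | ⟨i, j, k, l, hd, rfl⟩ | ⟨i, j, k, rfl⟩)
    · simp only [map_sub, lift_of_apply]
      rw [h.symm, sub_self]
    · obtain ⟨h1, h2, h3, h4⟩ := (inter_iff _ _ _ _).1 hd
      simp only [LieHom.map_lie, lift_of_apply]
      exact h.disj _ _ _ _ h1 h2 h3 h4
    · simp only [LieHom.map_lie, map_add, lift_of_apply]
      exact h.tri _ _ _)
  exact ⟨g, fun i j => by rw [tf_def, hg, lift_of_apply]⟩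

theorem ftc_lift {L : Type} [LieRing L] [LieAlgebra ℚ L] {r : ℕ}
    {t : Fin (r + 1) → Fin (r + 1) → L}
    (h : IsFtc t) : ∃ g : ftc r →ₗ⁅ℚ⁆ L, ∀ i j, g (tc i j) = t i j := by
  obtain ⟨g, hg⟩ := quo_lift (ftcRel r)
    (lift ℚ fun p : Fin (r + 1) × Fin (r + 1) => t p.1 p.2) (by
    rintro x (⟨i, j, rfl⟩ | ⟨i, j, k, l, hd, rfl⟩ | ⟨j, rfl⟩)
    · simp only [map_sub, lift_of_apply]
      rw [h.symm, sub_self]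
    · obtain ⟨h1, h2, h3, h4⟩ := (inter_iff _ _ _ _).1 hd
      simp only [LieHom.map_lie, lift_of_apply]
      exact h.disj _ _ _ _ h1 h2 h3 h4
    · simp only [map_sum, lift_of_apply]
      exact h.tot _)
  exact ⟨g, fun i j => by rw [tc_def, hg, lift_of_apply]⟩

theorem ft_hom_id {r : ℕ} (f : ft r →ₗ⁅ℚ⁆ ft r) (h : ∀ i j, f (tf i j) = tf i j) (x : ft r) :
    f x = x := by
  have e : f.comp (quoMap (ftRel r)) = quoMap (ftRel r) := by
    apply FreeLieAlgebra.hom_ext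
    rintro ⟨i, j⟩
    exact h i j
  obtain ⟨x, rfl⟩ := quoMap_surj _ x
  exact LieHom.congr_fun e x

theorem ftc_hom_id {r : ℕ} (f : ftc r →ₗ⁅ℚ⁆ ftc r) (h : ∀ i j, f (tc i j) = tc i j) (x : ftc r) :
    f x = x := by
  have e : f.comp (quoMap (ftcRel r)) = quoMap (ftcRel r) := by
    apply FreeLieAlgebra.hom_ext
    rintro ⟨i, j⟩
    exact h i j
  obtain ⟨x, rfl⟩ := quoMap_surj _ x
  exact LieHom.congr_fun e x

/-- For `r ≥ 1` there is a Lie algebra isomorphism `Φ : ft'(r) → ft(r)`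
determined on generators by `Φ(t_{ij}) = t_{ij}` for `1 ≤ i,j ≤ r`,
`Φ(t_{0j}) = Φ(t_{j0}) = −∑_{i=1}^r t_{ij}` for `1 ≤ j ≤ r`, and
`Φ(t_{00}) = ∑_{i,j=1}^r t_{ij}`.  In particular the two presentations define isomorphic
Lie algebras. -/
theorem ftc_equiv_ft (r : ℕ) (hr : 1 ≤ r) :
    ∃ Φ : ftc r ≃ₗ⁅ℚ⁆ ft r,
      (∀ i j : Fin r, Φ (tc i.succ j.succ) = tf i j) ∧
      (∀ j : Fin r, Φ (tc 0 j.succ) = -∑ i : Fin r, tf i j) ∧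
      (∀ j : Fin r, Φ (tc j.succ 0) = -∑ i : Fin r, tf i j) ∧
      Φ (tc 0 0) = ∑ i : Fin r, ∑ j : Fin r, tf i j := by
  obtain ⟨f, hf⟩ := ftc_lift (ext0_isFtc (tf_isFt r))
  obtain ⟨g, hg⟩ := ft_lift (ftc_isFt (tc_isFtc r))
  have hs : ∀ j : Fin r, -∑ i : Fin r, tc i.succ j.succ = tc 0 j.succ := by
    intro j
    have e := (tc_isFtc r).tot j.succ
    rw [Fin.sum_univ_succ] at e
    exact (eq_neg_of_add_eq_zero_left e).symm
  have hs0 : ∑ j : Fin r, ∑ i : Fin r, tc i.succ j.succ = tc 0 0 := by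
    have e := (tc_isFtc r).tot 0
    rw [Fin.sum_univ_succ] at e
    rw [eq_neg_of_add_eq_zero_left e, ← Finset.sum_neg_distrib]
    refine Finset.sum_congr rfl fun j _ => ?_
    rw [(tc_isFtc r).symm j.succ 0, ← hs, neg_neg]
  have h1 : ∀ x, g (f x) = x := ftc_hom_id (g.comp f) (by
    intro i j
    rw [LieHom.comp_apply, hf]
    cases i using Fin.cases <;> cases j using Fin.cases <;>
      simp only [ext0_00, ext0_0s, ext0_s0, ext0_ss, map_sum, map_neg, hg]
    · exact hs0
    · exact hs _
    · rw [hs]; exact (tc_isFtc r).symm _ _)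
  have h2 : ∀ x, f (g x) = x := ft_hom_id (f.comp g) (by
    intro i j
    rw [LieHom.comp_apply, hg, hf, ext0_ss])
  refine ⟨{ f with invFun := g, left_inv := h1, right_inv := h2 }, ?_, ?_, ?_, ?_⟩
  · intro i j; exact hf _ _
  · intro j; exact hf _ _
  · intro j; exact hf _ _
  · rw [Finset.sum_comm]; exact hf _ _
end

section
/- Let r ≥ 1. For every j ∈ {0,…,r}, the element t_{jj} lies in the center of ft'(r); that is, [t_{jj}, x] = 0 for all x ∈ ft'(r). -/
open FreeLieAlgebra

/-- The elements whose bracket with `a` lies in a Lie ideal `I` form a Lie subalgebra. -/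
def centMod {L : Type*} [LieRing L] [LieAlgebra ℚ L] (I : LieIdeal ℚ L) (a : L) :
    LieSubalgebra ℚ L where
  carrier := { y | ⁅a, y⁆ ∈ I }
  add_mem' := by
    intro x y hx hy
    simp only [Set.mem_ofPred_eq, lie_add] at *
    exact add_mem hx hy
  zero_mem' := by simp
  smul_mem' := by
    intro c x hx
    simp only [Set.mem_ofPred_eq, lie_smul] at *
    exact I.smul_mem c hx
  lie_mem' := by
    intro x y hx hy
    change ⁅a, ⁅x, y⁆⁆ ∈ I
    rw [leibniz_lie]
    exact add_mem (lie_mem_left ℚ L I _ _ hx) (lie_mem_right ℚ L I _ _ hy)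

theorem free_mem_of_gens {X : Type*} (S : LieSubalgebra ℚ (FreeLieAlgebra ℚ X))
    (h : ∀ x, of ℚ x ∈ S) (y : FreeLieAlgebra ℚ X) : y ∈ S := by
  let f : FreeLieAlgebra ℚ X →ₗ⁅ℚ⁆ S := lift ℚ (fun x => (⟨of ℚ x, h x⟩ : S))
  have hf : S.incl.comp f = LieHom.id := by
    apply FreeLieAlgebra.hom_ext
    intro x
    simp [f]
  have := congrArg (fun g => g y) hf
  simp only [LieHom.comp_apply, LieHom.id_apply] at this
  rw [← this]
  exact (f y).2

theorem diag_lie_gen (r : ℕ) (j k l : Fin (r + 1)) :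
    ⁅of ℚ (j, j), of ℚ (k, l)⁆ ∈
      LieSubmodule.lieSpan ℚ (FreeLieAlgebra ℚ (Fin (r + 1) × Fin (r + 1))) (ftcRel r) := by
  set I := LieSubmodule.lieSpan ℚ (FreeLieAlgebra ℚ (Fin (r + 1) × Fin (r + 1))) (ftcRel r)
    with hI
  have sub : ∀ x ∈ ftcRel r, x ∈ I := fun x hx => LieSubmodule.subset_lieSpan hx
  have h0 : ∀ k l, k ≠ j → l ≠ j → ⁅of ℚ (j, j), of ℚ (k, l)⁆ ∈ I := by
    intro k l hk hl
    refine sub _ (Or.inr (Or.inl ⟨j, j, k, l, ?_, rfl⟩))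
    ext x
    simp only [Set.mem_inter_iff, Set.mem_insert_iff, Set.mem_singleton_iff,
      Set.mem_empty_iff_false, iff_false]
    grind
  have h1 : ∀ l, l ≠ j → ⁅of ℚ (j, j), of ℚ (j, l)⁆ ∈ I := by
    intro l hl
    have hs : ⁅of ℚ (j, j), ∑ i : Fin (r + 1), of ℚ (i, l)⁆ ∈ I :=
      lie_mem_right ℚ _ I _ _ (sub _ (Or.inr (Or.inr ⟨l, rfl⟩)))
    rw [← Finset.add_sum_erase _ _ (Finset.mem_univ j), lie_add, lie_sum] at hs
    refine (add_mem_cancel_right (sum_mem ?_)).1 hs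
    intro i hi
    exact h0 i l (Finset.ne_of_mem_erase hi) hl
  by_cases hk : k = j
  · subst hk
    by_cases hl : l = k
    · subst hl
      simp
    · exact h1 l hl
  · by_cases hl : l = j
    · subst hl
      have hs : ⁅of ℚ (l, l), of ℚ (k, l) - of ℚ (l, k)⁆ ∈ I :=
        lie_mem_right ℚ _ I _ _ (sub _ (Or.inl ⟨k, l, rfl⟩))
      rw [lie_sub] at hs
      simpa using add_mem hs (h1 k hk)
    · exact h0 k l hk hl

/-- For `r ≥ 1` and every `j ∈ {0,…,r}`, the element `t_{jj}` is central in
`ft'(r)`: `[t_{jj}, x] = 0` for all `x ∈ ft'(r)`. -/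
theorem tc_diag_central (r : ℕ) (hr : 1 ≤ r) (j : Fin (r + 1)) (x : ftc r) :
    ⁅tc j j, x⁆ = 0 := by
  obtain ⟨y, rfl⟩ := LieSubmodule.Quotient.surjective_mk' _ x
  change ⁅tc j j, LieSubmodule.Quotient.mk y⁆ = 0
  rw [tc, ← LieSubmodule.Quotient.mk_bracket, LieSubmodule.Quotient.mk_eq_zero']
  exact free_mem_of_gens (centMod
    (LieSubmodule.lieSpan ℚ (FreeLieAlgebra ℚ (Fin (r + 1) × Fin (r + 1))) (ftcRel r))
    (of ℚ (j, j))) (fun p => diag_lie_gen r j p.1 p.2) y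
end

section
/- Let r ≥ 1 and let τ : ft(r) → ft(r) be the unique Lie algebra homomorphism with τ(t_{ij}) = t_{ij} for all 2 ≤ i,j ≤ r, τ(t_{1i}) = τ(t_{i1}) = −∑_{k=1}^r t_{ki} for all 2 ≤ i ≤ r, and τ(t_{11}) = ∑_{k,l=1}^r t_{kl}. Then τ ∘ τ is the identity of ft(r); in particular τ is a Lie algebra automorphism of ft(r) of order at most two. -/
open FreeLieAlgebra

/-- The quotient map as a Lie algebra homomorphism. -/
noncomputable def ftProj (r : ℕ) : FreeLieAlgebra ℚ (Fin r × Fin r) →ₗ⁅ℚ⁆ ft r :=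
  { ((LieSubmodule.Quotient.mk'
      (LieSubmodule.lieSpan ℚ (FreeLieAlgebra ℚ (Fin r × Fin r)) (ftRel r))) :
      FreeLieAlgebra ℚ (Fin r × Fin r) →ₗ[ℚ] ft r) with
    map_lie' := fun {x y} => LieSubmodule.Quotient.mk_bracket _ x y }

theorem tf_symm {r : ℕ} (i j : Fin r) : (tf i j : ft r) = tf j i := by
  have h : (of ℚ (i, j) - of ℚ (j, i) : FreeLieAlgebra ℚ (Fin r × Fin r)) ∈
      LieSubmodule.lieSpan ℚ (FreeLieAlgebra ℚ (Fin r × Fin r)) (ftRel r) :=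
    LieSubmodule.subset_lieSpan (Or.inl ⟨i, j, rfl⟩)
  exact (Submodule.Quotient.eq _).2 h

theorem eq_id_of_tf {r : ℕ} (f : ft r →ₗ⁅ℚ⁆ ft r) (h : ∀ i j : Fin r, f (tf i j) = tf i j)
    (x : ft r) : f x = x := by
  have key : f.comp (ftProj r) = ftProj r := by
    apply FreeLieAlgebra.hom_ext
    intro p
    exact h p.1 p.2
  obtain ⟨y, rfl⟩ := LieSubmodule.Quotient.surjective_mk' _ x
  exact congrArg (fun g => g y) key

/-- For `r ≥ 1`, if `τ : ft(r) → ft(r)` is the Lie algebra homomorphism with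
`τ(t_{ij}) = t_{ij}` for `2 ≤ i,j ≤ r`, `τ(t_{1i}) = τ(t_{i1}) = −∑_{k=1}^r t_{ki}` for
`2 ≤ i ≤ r`, and `τ(t_{11}) = ∑_{k,l=1}^r t_{kl}`, then `τ ∘ τ = id`; in particular `τ` is an
automorphism of order at most two.  (The index `1` is represented by `⟨0, hr⟩ : Fin r`.) -/
theorem cyclic_map_involutive (r : ℕ) (hr : 1 ≤ r) (τ : ft r →ₗ⁅ℚ⁆ ft r)
    (h1 : ∀ i j : Fin r, i ≠ ⟨0, hr⟩ → j ≠ ⟨0, hr⟩ → τ (tf i j) = tf i j)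
    (h2 : ∀ i : Fin r, i ≠ ⟨0, hr⟩ → τ (tf ⟨0, hr⟩ i) = -∑ k : Fin r, tf k i)
    (h3 : ∀ i : Fin r, i ≠ ⟨0, hr⟩ → τ (tf i ⟨0, hr⟩) = -∑ k : Fin r, tf k i)
    (h4 : τ (tf ⟨0, hr⟩ ⟨0, hr⟩) = ∑ k : Fin r, ∑ l : Fin r, tf k l) :
    ∀ x : ft r, τ (τ x) = x := by
  have hsum : ∀ f : Fin r → ft r, ∑ k, f k = f ⟨0, hr⟩ + ∑ k ∈ Finset.univ.erase ⟨0, hr⟩, f k :=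
    fun f => (Finset.add_sum_erase _ f (Finset.mem_univ _)).symm
  -- the column sums
  have hc : ∀ i : Fin r, i ≠ ⟨0, hr⟩ → τ (∑ k : Fin r, tf k i) = -tf ⟨0, hr⟩ i := by
    intro i hi
    have e : ∑ k ∈ Finset.univ.erase ⟨0, hr⟩, τ (tf k i)
        = ∑ k ∈ Finset.univ.erase ⟨0, hr⟩, tf k i :=
      Finset.sum_congr rfl fun k hk => h1 k i (Finset.ne_of_mem_erase hk) hi
    rw [map_sum, hsum, h2 i hi, e, hsum (fun k => tf k i)]
    abel
  have hc0 : τ (∑ k : Fin r, tf k ⟨0, hr⟩) = ∑ k : Fin r, tf k ⟨0, hr⟩ := by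
    have e : ∑ k ∈ Finset.univ.erase ⟨0, hr⟩, τ (tf k ⟨0, hr⟩)
        = ∑ k ∈ Finset.univ.erase ⟨0, hr⟩, -∑ l : Fin r, tf l k :=
      Finset.sum_congr rfl fun k hk => h3 k (Finset.ne_of_mem_erase hk)
    rw [map_sum, hsum, h4, e, Finset.sum_comm, hsum (fun l => ∑ k : Fin r, tf k l),
      Finset.sum_neg_distrib]
    abel
  have h00 : τ (τ (tf ⟨0, hr⟩ ⟨0, hr⟩)) = tf ⟨0, hr⟩ ⟨0, hr⟩ := by
    have e : ∑ l ∈ Finset.univ.erase ⟨0, hr⟩, τ (∑ k : Fin r, tf k l)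
        = ∑ l ∈ Finset.univ.erase ⟨0, hr⟩, -tf l ⟨0, hr⟩ :=
      Finset.sum_congr rfl fun l hl => by
        rw [hc l (Finset.ne_of_mem_erase hl), tf_symm]
    rw [h4, Finset.sum_comm, map_sum, hsum, hc0, e, hsum (fun k => tf k ⟨0, hr⟩),
      Finset.sum_neg_distrib]
    abel
  intro x
  refine eq_id_of_tf (τ.comp τ) (fun i j => ?_) x
  rw [LieHom.comp_apply]
  by_cases hi : i = ⟨0, hr⟩
  · subst hi
    by_cases hj : j = ⟨0, hr⟩
    · subst hj
      exact h00
    · rw [h2 j hj, map_neg, hc j hj, neg_neg]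
  · by_cases hj : j = ⟨0, hr⟩
    · subst hj
      rw [h3 i hi, map_neg, hc i hi, neg_neg, tf_symm]
    · rw [h1 i j hi hj, h1 i j hi hj]
end

section
/- Let r ≥ 1. For all i, j, k ∈ {0,…,r}, the relation [t_{ij}, t_{ki} + t_{kj}] = 0 holds in ft'(r). (In particular the defining relations of the presentation of ft(r) with indices 1,…,r are consequences of the cyclic presentation.) -/
open FreeLieAlgebra

theorem tc_rel_zero {r : ℕ} {x : FreeLieAlgebra ℚ (Fin (r + 1) × Fin (r + 1))}
    (hx : x ∈ ftcRel r) :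
    (LieSubmodule.Quotient.mk
      (N := LieSubmodule.lieSpan ℚ (FreeLieAlgebra ℚ (Fin (r + 1) × Fin (r + 1))) (ftcRel r))
      x : ftc r) = 0 :=
  (LieSubmodule.Quotient.mk_eq_zero _).2 (LieSubmodule.subset_lieSpan hx)

theorem tc_symm {r : ℕ} (i j : Fin (r + 1)) : tc i j = tc j i := by
  have h := tc_rel_zero (r := r) (Or.inl ⟨i, j, rfl⟩)
  exact sub_eq_zero.1 h

theorem tc_comm {r : ℕ} (i j k l : Fin (r + 1)) (h1 : k ≠ i) (h2 : k ≠ j) (h3 : l ≠ i)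
    (h4 : l ≠ j) : ⁅tc i j, tc k l⁆ = 0 := by
  have h := tc_rel_zero (r := r) (Or.inr (Or.inl ⟨i, j, k, l, by
    ext x
    simp only [Set.mem_inter_iff, Set.mem_insert_iff, Set.mem_singleton_iff,
      Set.mem_empty_iff_false, iff_false]
    grind, rfl⟩))
  rw [LieSubmodule.Quotient.mk_bracket] at h
  exact h

theorem tc_sum {r : ℕ} (j : Fin (r + 1)) : ∑ i, tc i j = 0 := by
  have h := tc_rel_zero (r := r) (Or.inr (Or.inr ⟨j, rfl⟩))
  have h2 := map_sum (LieSubmodule.Quotient.mk'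
    (LieSubmodule.lieSpan ℚ (FreeLieAlgebra ℚ (Fin (r + 1) × Fin (r + 1))) (ftcRel r)))
    (fun i => of ℚ (i, j)) Finset.univ
  exact h2.symm.trans h

theorem ftc_lie_add {r : ℕ} (a b c : ftc r) : ⁅a, b + c⁆ = ⁅a, b⁆ + ⁅a, c⁆ :=
  lie_add a b c

theorem ftc_lie_zero {r : ℕ} (a : ftc r) : ⁅a, (0 : ftc r)⁆ = 0 :=
  lie_zero a

theorem ftc_lie_self {r : ℕ} (a : ftc r) : ⁅a, a⁆ = 0 :=
  lie_self a

theorem ftc_lie_swap {r : ℕ} (a b : ftc r) (h : ⁅a, b⁆ = 0) : ⁅b, a⁆ = 0 := by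
  have h1 : -⁅a, b⁆ = ⁅b, a⁆ := lie_skew b a
  rw [← h1, h, neg_zero]

theorem ftc_lie_sum {r : ℕ} (a : ftc r) (s : Finset (Fin (r + 1))) (f : Fin (r + 1) → ftc r) :
    ⁅a, ∑ l ∈ s, f l⁆ = ∑ l ∈ s, ⁅a, f l⁆ := by
  induction s using Finset.induction_on with
  | empty => simpa using ftc_lie_zero a
  | insert x s hx ih => rw [Finset.sum_insert hx, Finset.sum_insert hx, ftc_lie_add, ih]

theorem tc_bracket_sum {r : ℕ} (i j k : Fin (r + 1)) : ∑ l, ⁅tc i j, tc l k⁆ = 0 := by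
  rw [← ftc_lie_sum, tc_sum, ftc_lie_zero]

theorem tc_diag {r : ℕ} (i k : Fin (r + 1)) : ⁅tc i i, tc i k⁆ = 0 := by
  by_cases h : k = i
  · subst h; exact ftc_lie_self _
  · rw [← tc_bracket_sum i i k]
    exact (Finset.sum_eq_single i (fun l _ hl => tc_comm i i l k hl hl h h) (by simp)).symm

/-- For `r ≥ 1` and all `i, j, k ∈ {0,…,r}` the relation
`[t_{ij}, t_{ki} + t_{kj}] = 0` holds in `ft'(r)`. -/
theorem ftc_hexagon_relation (r : ℕ) (hr : 1 ≤ r) (i j k : Fin (r + 1)) :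
    ⁅tc i j, tc k i + tc k j⁆ = 0 := by
  rw [ftc_lie_add]
  by_cases hij : i = j
  · subst hij
    rw [tc_symm k i, tc_diag, add_zero]
  by_cases hki : k = i
  · subst hki
    rw [ftc_lie_swap _ _ (tc_diag k j), ftc_lie_self, add_zero]
  by_cases hkj : k = j
  · subst hkj
    rw [tc_symm k i, ftc_lie_self, zero_add, tc_symm i k, ftc_lie_swap _ _ (tc_diag k i)]
  rw [← tc_bracket_sum i j k, tc_symm k i, tc_symm k j]
  exact (Finset.sum_eq_add i j hij
    (fun l _ hl => tc_comm i j l k hl.1 hl.2 hki hkj) (by simp) (by simp)).symm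
end
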